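/- Let 0 ≤ r1, r2 ≤ n and 0 ≤ s ≤ min(r1, n − r1, r2, n − r2), and write h(t) = λ_s^{r1,r2}(t; n). Then for all t ∈ ℂ: t(r1 − r2 + t)·(h(t+1) − 2h(t) + h(t−1)) + (r2(n − r1) − n·t)·(h(t+1) − h(t)) + s(n − s + 1)·h(t) = 0. That is, the Hahn kernel satisfies the difference equation of hypergeometric type σ(t)Δ∇h + τ(t)Δh + μ h = 0 with σ(t) = t(r1 − r2 + t), τ(t) = r2(n − r1) − nt and μ = s(n − s + 1). -/

import Mathlib

/-- Falling factorial `z(z-1)⋯(z-k+1)` for complex `z`. -/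
noncomputable def cfall (z : ℂ) (k : ℕ) : ℂ := ∏ i ∈ Finset.range k, (z - i)

/-- Generalized binomial coefficient `binom(t, j)` for complex `t`. -/
noncomputable def cbinom (t : ℂ) (j : ℕ) : ℂ := cfall t j / (Nat.factorial j)

/-- The Hahn kernel `λ_s^{r1,r2}(t; n)`. -/
noncomputable def hahn (n r1 r2 s : ℕ) (t : ℂ) : ℂ :=
  ∑ j ∈ Finset.range (s + 1),
    (-1 : ℂ) ^ j * cbinom t j * cfall (s : ℂ) j * cfall ((n : ℂ) - s + 1) j /
      (cfall ((n : ℂ) - r1) j * cfall (r2 : ℂ) j)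

lemma cfall_succ (z : ℂ) (k : ℕ) : cfall z (k + 1) = cfall z k * (z - k) := by
  simp [cfall, Finset.prod_range_succ]

lemma cfall_succ' (z : ℂ) (k : ℕ) : cfall (z + 1) (k + 1) = (z + 1) * cfall z k := by
  unfold cfall
  rw [Finset.prod_range_succ', mul_comm]
  congr 1
  · simp
  · refine Finset.prod_congr rfl fun i _ => ?_
    push_cast; ring

lemma cbinom_succ (t : ℂ) (j : ℕ) : ((j : ℂ) + 1) * cbinom t (j + 1) = (t - j) * cbinom t j := by
  have h : ((j : ℂ) + 1) ≠ 0 := by exact_mod_cast Nat.succ_ne_zero j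
  have hf : (Nat.factorial j : ℂ) ≠ 0 := by exact_mod_cast Nat.factorial_ne_zero j
  unfold cbinom
  rw [cfall_succ, Nat.factorial_succ]
  push_cast
  field_simp

lemma cbinom_diff (t : ℂ) (j : ℕ) : cbinom (t + 1) (j + 1) - cbinom t (j + 1) = cbinom t j := by
  have h : ((j : ℂ) + 1) ≠ 0 := by exact_mod_cast Nat.succ_ne_zero j
  have hf : (Nat.factorial j : ℂ) ≠ 0 := by exact_mod_cast Nat.factorial_ne_zero j
  unfold cbinom
  rw [cfall_succ', cfall_succ, Nat.factorial_succ]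
  push_cast
  field_simp
  ring

lemma cbinom_shift (t : ℂ) (j : ℕ) : t * cbinom (t - 1) j = (t - j) * cbinom t j := by
  have h := cfall_succ' (t - 1) j
  rw [sub_add_cancel, cfall_succ] at h
  unfold cbinom
  rw [← mul_div_assoc, ← mul_div_assoc, ← h, mul_comm]

lemma cfall_nat_ne (a j : ℕ) (h : j ≤ a) : cfall (a : ℂ) j ≠ 0 := by
  unfold cfall
  refine Finset.prod_ne_zero_iff.2 fun i hi => ?_
  have : i < a := lt_of_lt_of_le (Finset.mem_range.1 hi) h
  exact sub_ne_zero.2 (by exact_mod_cast this.ne')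

/-- The operator applied to a binomial. -/
lemma op_cbinom (n p r2 s t : ℂ) (j : ℕ) :
    t * (n - p - r2 + t) * (cbinom (t + 1) (j + 1) - 2 * cbinom t (j + 1) + cbinom (t - 1) (j + 1))
      + (r2 * p - n * t) * (cbinom (t + 1) (j + 1) - cbinom t (j + 1))
      + s * (n - s + 1) * cbinom t (j + 1)
    = (s - (j + 1)) * (n - s + 1 - (j + 1)) * cbinom t (j + 1) + (p - j) * (r2 - j) * cbinom t j := by
  have e1 := cbinom_diff t j
  have e2 := cbinom_diff (t - 1) j
  rw [sub_add_cancel] at e2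
  have e3 := cbinom_shift t j
  have e4 := cbinom_succ t j
  have e5 : t * (cbinom (t + 1) (j + 1) - 2 * cbinom t (j + 1) + cbinom (t - 1) (j + 1))
      = j * cbinom t j := by
    linear_combination t * e1 - t * e2 - e3
  linear_combination (n - p - r2 + t) * e5 + (r2 * p - n * t) * e1 + (n - j) * e4

/-- Coefficients of the kernel. -/
noncomputable def hcoef (n p r2 s : ℂ) (j : ℕ) : ℂ :=
  (-1 : ℂ) ^ j * cfall s j * cfall (n - s + 1) j / (cfall p j * cfall r2 j)

lemma hcoef_succ (n p r2 s : ℂ) (j : ℕ) (h1 : cfall p (j + 1) ≠ 0) (h2 : cfall r2 (j + 1) ≠ 0) :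
    hcoef n p r2 s (j + 1) * ((p - j) * (r2 - j))
      = - (hcoef n p r2 s j * ((s - j) * (n - s + 1 - j))) := by
  unfold hcoef
  rw [cfall_succ] at h1 h2
  obtain ⟨a1, b1⟩ := mul_ne_zero_iff.1 h1
  obtain ⟨a2, b2⟩ := mul_ne_zero_iff.1 h2
  simp only [cfall_succ, pow_succ]
  field_simp

lemma partial_sum (n p r2 s t : ℂ) (m : ℕ) (hp : ∀ j ≤ m, cfall p j ≠ 0)
    (hr : ∀ j ≤ m, cfall r2 j ≠ 0) :
    ∑ j ∈ Finset.range (m + 1), hcoef n p r2 s j *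
      (t * (n - p - r2 + t) * (cbinom (t + 1) j - 2 * cbinom t j + cbinom (t - 1) j)
      + (r2 * p - n * t) * (cbinom (t + 1) j - cbinom t j)
      + s * (n - s + 1) * cbinom t j)
    = hcoef n p r2 s m * ((s - m) * (n - s + 1 - m)) * cbinom t m := by
  induction m with
  | zero => simp [cbinom, cfall]; left; right; norm_num
  | succ m ih =>
    rw [Finset.sum_range_succ, ih (fun j hj => hp j (by omega)) (fun j hj => hr j (by omega)),
      op_cbinom]
    have := hcoef_succ n p r2 s m (hp _ le_rfl) (hr _ le_rfl)
    push_cast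
    linear_combination cbinom t m * this

/-- The Hahn kernel `h = λ_s^{r1,r2}(·; n)` satisfies the hypergeometric difference equation
`σ(t)Δ∇h(t) + τ(t)Δh(t) + s(n-s+1)h(t) = 0` with `σ(t) = t(r1-r2+t)` and
`τ(t) = r2(n-r1) - nt`, for all `t ∈ ℂ`. -/
theorem stmt_13 (n r1 r2 s : ℕ) (h1 : r1 ≤ n) (h2 : r2 ≤ n)
    (hs : s ≤ min (min r1 (n - r1)) (min r2 (n - r2))) (t : ℂ) :
    t * ((r1 : ℂ) - r2 + t) *
        (hahn n r1 r2 s (t + 1) - 2 * hahn n r1 r2 s t + hahn n r1 r2 s (t - 1)) +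
      ((r2 : ℂ) * ((n : ℂ) - r1) - (n : ℂ) * t) *
        (hahn n r1 r2 s (t + 1) - hahn n r1 r2 s t) +
      (s : ℂ) * ((n : ℂ) - s + 1) * hahn n r1 r2 s t = 0 := by
  have hs1 : s ≤ n - r1 := by omega
  have hs2 : s ≤ r2 := by omega
  have hc : ((n : ℂ) - r1) = ((n - r1 : ℕ) : ℂ) := by push_cast [h1]; rfl
  have key := partial_sum n ((n : ℂ) - r1) r2 s t s
    (fun j hj => by rw [hc]; exact cfall_nat_ne _ _ (hj.trans hs1))
    (fun j hj => cfall_nat_ne _ _ (hj.trans hs2))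
  have hh : ∀ u, hahn n r1 r2 s u
      = ∑ j ∈ Finset.range (s + 1), hcoef n ((n : ℂ) - r1) r2 s j * cbinom u j := by
    intro u
    refine Finset.sum_congr rfl fun j _ => ?_
    unfold hcoef
    ring
  rw [sub_self, zero_mul, mul_zero, zero_mul] at key
  rw [← key]
  simp only [hh, Finset.mul_sum, ← Finset.sum_sub_distrib, ← Finset.sum_add_distrib]
  refine Finset.sum_congr rfl fun j _ => ?_
  ring
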